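/- Let 𝒜 and ℬ be AD-families on ℕ such that the filters F_𝒜 and F_ℬ are FU-filters. If F_ℬ is an α₃-filter and F_𝒜 ≤_RK F_ℬ, then F_𝒜 is an α₃-filter. -/

import Mathlib

open Set

/-- `f[G] = {A : f⁻¹(A) ∈ G}`, the image (Rudin–Keisler) filter of a family of sets. -/
def mapFilter {α β : Type*} (f : α → β) (G : Set (Set α)) : Set (Set β) := {A | f ⁻¹' A ∈ G}

/-- `F` is a (proper) filter of subsets. -/
def IsFilterFam {α : Type*} (F : Set (Set α)) : Prop :=
  Set.univ ∈ F ∧ (∀ A ∈ F, ∀ B : Set α, A ⊆ B → B ∈ F) ∧ (∀ A ∈ F, ∀ B ∈ F, A ∩ B ∈ F)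

/-- A free filter: a proper filter containing all cofinite sets. -/
def IsFreeFilter {α : Type*} (F : Set (Set α)) : Prop :=
  IsFilterFam F ∧ (∀ A : Set α, Aᶜ.Finite → A ∈ F) ∧ ∅ ∉ F

/-- `S → F` : `S` is an infinite set converging to the filter `F`, i.e. `S ⊆* A` for all `A ∈ F`. -/
def ConvTo {α : Type*} (S : Set α) (F : Set (Set α)) : Prop :=
  S.Infinite ∧ ∀ A ∈ F, (S \ A).Finite

/-- `F` is relatively equivalent to the Fréchet filter: some `A ∈ F` converges to `F`. -/
def RelFrechet {α : Type*} (F : Set (Set α)) : Prop := ∃ A ∈ F, ConvTo A F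

/-- Rudin–Keisler order: `F ≤_RK G` iff `f[G] = F` for some surjection `f`. -/
def RKle {α : Type*} (F G : Set (Set α)) : Prop :=
  ∃ f : α → α, Function.Surjective f ∧ mapFilter f G = F

/-- `F ≈ G` : there is a bijection `f` with `f[F] = G`. -/
def EquivFilter {α : Type*} (F G : Set (Set α)) : Prop :=
  ∃ f : α → α, Function.Bijective f ∧ mapFilter f F = G

/-- `F <_RK G` : `F ≤_RK G` and `¬ (F ≈ G)`. -/
def RKlt {α : Type*} (F G : Set (Set α)) : Prop := RKle F G ∧ ¬ EquivFilter F G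

/-- An AD-family: an infinite family of infinite sets with pairwise finite intersections. -/
def IsADFamily {α : Type*} (𝒜 : Set (Set α)) : Prop :=
  𝒜.Infinite ∧ (∀ A ∈ 𝒜, A.Infinite) ∧ ∀ A ∈ 𝒜, ∀ B ∈ 𝒜, A ≠ B → (A ∩ B).Finite

/-- The ideal generated by a family `𝒜`: sets almost covered by finitely many members of `𝒜`. -/
def idealGen {α : Type*} (𝒜 : Set (Set α)) : Set (Set α) :=
  {X | ∃ 𝒜' : Finset (Set α), ↑𝒜' ⊆ 𝒜 ∧ (X \ ⋃₀ ↑𝒜').Finite}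

/-- `S_𝒜`: the filter dual to the ideal generated by `𝒜`. -/
def SFam {α : Type*} (𝒜 : Set (Set α)) : Set (Set α) := {F | Fᶜ ∈ idealGen 𝒜}

/-- `F_𝒟 = {F : D ⊆* F for every D ∈ 𝒟}`. -/
def FFam {α : Type*} (𝒟 : Set (Set α)) : Set (Set α) := {F | ∀ D ∈ 𝒟, (D \ F).Finite}

/-- A nowhere MAD family: every set outside the generated ideal contains an infinite set
almost disjoint from every member of `𝒜`. -/
def IsNMAD {α : Type*} (𝒜 : Set (Set α)) : Prop :=
  IsADFamily 𝒜 ∧ ∀ X : Set α, X ∉ idealGen 𝒜 →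
    ∃ B ⊆ X, B.Infinite ∧ ∀ A ∈ 𝒜, (B ∩ A).Finite

/-- A partition of `ℕ` into infinitely many infinite sets. -/
def IsInfPartition (𝒬 : Set (Set ℕ)) : Prop :=
  𝒬.Infinite ∧ (∀ P ∈ 𝒬, P.Infinite) ∧ ⋃₀ 𝒬 = Set.univ ∧
    ∀ P ∈ 𝒬, ∀ Q ∈ 𝒬, P ≠ Q → P ∩ Q = ∅

/-- `F` is a Fréchet–Urysohn filter: every `F`-positive set contains a sequence converging to `F`. -/
def IsFUFilter {α : Type*} (F : Set (Set α)) : Prop :=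
  ∀ A : Set α, Aᶜ ∉ F → ∃ S ⊆ A, ConvTo S F

/-- The trace filter `F|_A = {G ∩ A : G ∈ F}`. -/
def traceFam {α : Type*} (F : Set (Set α)) (A : Set α) : Set (Set α) := {S | ∃ G ∈ F, S = G ∩ A}

/-- Todorčević–Uzcátegui order: there are `A ∈ G⁺`, `B ∈ F` and a bijection `f : A → B`
with `f[G|_A] = F|_B`. -/
def TUle {α : Type*} (F G : Set (Set α)) : Prop :=
  ∃ A : Set α, Aᶜ ∉ G ∧ ∃ B ∈ F, ∃ f : α → α, Set.BijOn f A B ∧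
    {Y : Set α | Y ⊆ B ∧ A ∩ f ⁻¹' Y ∈ traceFam G A} = traceFam F B

/-- An α₃-filter: for every sheaf there is a convergent set meeting infinitely many
members infinitely. -/
def Alpha3 (F : Set (Set ℕ)) : Prop :=
  ∀ C : ℕ → Set ℕ, (∀ n, ConvTo (C n) F) →
    ∃ B : Set ℕ, ConvTo B F ∧ {n : ℕ | (C n ∩ B).Infinite}.Infinite

/-! Pull each member `C n` of a sheaf of `f[G]` back along `f`: its preimage is `G`-positive, so
the Fréchet–Urysohn property gives `S n ⊆ f⁻¹(C n)` converging to `G`. If `B` is an α₃-witness for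
the sheaf `S`, then the image of `B` under `f` is one for `C`. The only danger is that `f`
collapses an infinite set to a finite one; this cannot happen on sets converging to `G`, because
`f[G]` is free. -/

section

variable {α β : Type*}

theorem mem_FFam_of_finite_compl {𝒟 : Set (Set α)} {A : Set α} (hA : Aᶜ.Finite) : A ∈ FFam 𝒟 :=
  fun _ _ ↦ hA.subset fun _ hx ↦ hx.2

namespace ConvTo

theorem mono {F : Set (Set α)} {S T : Set α} (hS : ConvTo S F) (hTS : T ⊆ S) (hT : T.Infinite) :
    ConvTo T F :=
  ⟨hT, fun A hA ↦ (hS.2 A hA).subset (sdiff_subset_sdiff_left hTS)⟩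

theorem compl_notMem {F : Set (Set α)} {S : Set α} (hS : ConvTo S F) : Sᶜ ∉ F := fun hmem ↦
  hS.1 (by simpa only [sdiff_compl, inter_self] using hS.2 Sᶜ hmem)

variable {f : α → β} {G : Set (Set α)} {S : Set α}

theorem infinite_image (hfree : ∀ A : Set β, Aᶜ.Finite → A ∈ mapFilter f G) (hS : ConvTo S G) :
    (f '' S).Infinite := by
  intro hfin
  have hmem : f ⁻¹' (f '' S)ᶜ ∈ G := hfree (f '' S)ᶜ (by rwa [compl_compl])
  have hdiff : S \ f ⁻¹' (f '' S)ᶜ = S := by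
    rw [preimage_compl, sdiff_compl, inter_eq_left.2 (subset_preimage_image f S)]
  exact hS.1 (hdiff ▸ hS.2 _ hmem)

theorem image (hfree : ∀ A : Set β, Aᶜ.Finite → A ∈ mapFilter f G) (hS : ConvTo S G) :
    ConvTo (f '' S) (mapFilter f G) := by
  refine ⟨hS.infinite_image hfree, fun A hA ↦ ?_⟩
  rw [← image_sdiff_preimage]
  exact (hS.2 (f ⁻¹' A) hA).image f

end ConvTo

theorem IsFUFilter.exists_convTo_subset_preimage {f : α → β} {G : Set (Set α)} {C : Set β}
    (hG : IsFUFilter G) (hC : ConvTo C (mapFilter f G)) : ∃ S ⊆ f ⁻¹' C, ConvTo S G :=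
  hG (f ⁻¹' C) hC.compl_notMem

end

theorem statement15_general {f : ℕ → ℕ} {G : Set (Set ℕ)}
    (hfree : ∀ A : Set ℕ, Aᶜ.Finite → A ∈ mapFilter f G) (hFU : IsFUFilter G) (hα : Alpha3 G) :
    Alpha3 (mapFilter f G) := by
  intro C hC
  choose S hSC hS using fun n ↦ hFU.exists_convTo_subset_preimage (hC n)
  obtain ⟨B, hB, hinf⟩ := hα S hS
  refine ⟨f '' B, hB.image hfree, hinf.mono fun n hn ↦ ?_⟩
  have himage : (f '' (S n ∩ B)).Infinite := (hB.mono inter_subset_right hn).infinite_image hfree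
  have hsub : f '' (S n ∩ B) ⊆ C n ∩ f '' B :=
    (image_inter_subset f (S n) B).trans (inter_subset_inter_left _ (image_subset_iff.2 (hSC n)))
  exact himage.mono hsub

/-- The α₃ property is downward preserved by the RK-order among FU-filters. -/
theorem statement15 (𝒜 ℬ : Set (Set ℕ)) (h𝒜 : IsADFamily 𝒜) (hℬ : IsADFamily ℬ)
    (hFU𝒜 : IsFUFilter (FFam 𝒜)) (hFUℬ : IsFUFilter (FFam ℬ))
    (hα : Alpha3 (FFam ℬ)) (h : RKle (FFam 𝒜) (FFam ℬ)) : Alpha3 (FFam 𝒜) := by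
  obtain ⟨f, -, hf⟩ := h
  exact hf ▸ statement15_general (fun A hA ↦ hf ▸ mem_FFam_of_finite_compl hA) hFUℬ hα
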